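/- arXiv:0801.1742 — 8 statements merged into one kernel-verified Lean document; each statement's English description precedes it below -/
import Mathlib

section
/- The bracket defined on the standard basis of ℝ^{4n} by the 4n-parametric family of structure equations (brackets nonzero only inside each 4-dimensional block, with coefficients λ) satisfies the Jacobi identity [[x,y],z] + [[y,z],x] + [[z,x],y] = 0 for all x, y, z, and hence makes ℝ^{4n} a Lie algebra. -/
noncomputable section

/-- The signature of the basis vectors inside each block: `(+, +, -, -)`. -/
def sgn : Fin 4 → ℝ := ![1, 1, -1, -1]

/-- Structure constants of the bracket inside one block, depending on the four
parameters `l 0 = λ_1̄`, `l 1 = λ_2̄`, `l 2 = λ_3̄`, `l 3 = λ_4̄`: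
`sc l r s` is the coordinate vector of `[X_r, X_s]`. -/
def sc (l : Fin 4 → ℝ) : Fin 4 → Fin 4 → Fin 4 → ℝ :=
  ![![![0, 0, 0, 0], ![0, 0, l 1, -l 0], ![0, l 1, 0, l 3], ![0, -l 0, -l 3, 0]],
    ![![0, 0, -l 1, l 0], ![0, 0, 0, 0], ![-l 1, 0, 0, -l 2], ![l 0, 0, l 2, 0]],
    ![![0, -l 1, 0, -l 3], ![l 1, 0, 0, l 2], ![0, 0, 0, 0], ![-l 3, l 2, 0, 0]],
    ![![0, l 0, l 3, 0], ![-l 0, 0, -l 2, 0], ![l 3, -l 2, 0, 0], ![0, 0, 0, 0]]]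

/-- `V n = ℝ^{4n}`, with coordinates indexed by a block `α : Fin n` and an
offset `r : Fin 4` (offset `r` corresponds to the basis vector `X_{4α+r+1}`,
i.e. `r = 0,1,2,3` correspond to `1̄,2̄,3̄,4̄`). -/
abbrev V (n : ℕ) : Type := Fin n × Fin 4 → ℝ

/-- The `4n`-parametric family of brackets on `ℝ^{4n}`: bilinear, vanishing on
pairs of basis vectors from different blocks, and given inside each block `α`
by the structure constants `sc` with parameters `λ_{4α+1},…,λ_{4α+4}`. -/
def brk {n : ℕ} (lam : Fin n × Fin 4 → ℝ) (x y : V n) : V n := fun p =>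
  ∑ r : Fin 4, ∑ s : Fin 4,
    x (p.1, r) * y (p.1, s) * sc (fun t => lam (p.1, t)) r s p.2

/-- The standard basis vectors `X_i` of `ℝ^{4n}`. -/
def X {n : ℕ} (i : Fin n × Fin 4) : V n := fun j => if j = i then 1 else 0

/-- The Norden metric `g`: the standard basis is orthogonal with
`g(X_1̄,X_1̄) = g(X_2̄,X_2̄) = 1`, `g(X_3̄,X_3̄) = g(X_4̄,X_4̄) = -1` in each block. -/
def gf {n : ℕ} (x y : V n) : ℝ := ∑ p : Fin n × Fin 4, sgn p.2 * x p * y p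

/-- The almost complex structure `J`: `J X_1̄ = X_3̄`, `J X_2̄ = X_4̄`,
`J X_3̄ = -X_1̄`, `J X_4̄ = -X_2̄` in each block. -/
def Jm {n : ℕ} (x : V n) : V n := fun p =>
  ![-x (p.1, 2), -x (p.1, 3), x (p.1, 0), x (p.1, 1)] p.2

/-- the bracket of the `4n`-parametric family satisfies the
Jacobi identity, and hence makes `ℝ^{4n}` a Lie algebra. -/
theorem brk_jacobi {n : ℕ} (hn : 1 ≤ n) (lam : Fin n × Fin 4 → ℝ)
    (x y z : V n) :
    brk lam (brk lam x y) z + brk lam (brk lam y z) x + brk lam (brk lam z x) y = 0 := by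
  funext p
  obtain ⟨a, i⟩ := p
  fin_cases i <;>
  · simp [brk, sc, Fin.sum_univ_four]
    ring
end
end

section
/- For the 4n-parametric family of Lie brackets on ℝ^{4n}, the Norden metric g is a Killing metric, i.e. g([x,y],z) + g([x,z],y) = 0 for all x, y, z ∈ ℝ^{4n} (equivalently, g is ad-invariant). -/
noncomputable section

/-- for the `4n`-parametric family of Lie brackets on `ℝ^{4n}`,
the Norden metric `g` is a Killing metric, i.e. `g([x,y],z) + g([x,z],y) = 0`
for all `x, y, z` (equivalently, `g` is ad-invariant). -/
theorem gf_killing {n : ℕ} (hn : 1 ≤ n) (lam : Fin n × Fin 4 → ℝ)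
    (x y z : V n) :
    gf (brk lam x y) z + gf (brk lam x z) y = 0 := by
  unfold gf
  rw [← Finset.sum_add_distrib, Fintype.sum_prod_type]
  apply Finset.sum_eq_zero
  intro a _
  simp [brk, sgn, sc, Fin.sum_univ_four]
  ring
end
end

section
/- Let 𝔤 be a finite-dimensional real Lie algebra, g a symmetric bilinear form on 𝔤 that is ad-invariant (g([x,y],z) + g([x,z],y) = 0 for all x,y,z), and J a linear endomorphism of 𝔤 with J² = −id and g(Jx,Jy) = −g(x,y) for all x,y. Define F(x,y,z) = ½(g([x,Jy],z) − g([x,y],Jz)). Then the cyclic sum of F vanishes: F(x,y,z) + F(y,z,x) + F(z,x,y) = 0 for all x, y, z (the quasi-Kähler W₃-condition). -/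
/-- for a finite-dimensional real Lie algebra with an ad-invariant
(Killing) symmetric bilinear form `g` and an almost complex structure `J`
(`J² = -id`) which is an anti-isometry for `g` (so `g` is a Norden metric), the
tensor `F(x,y,z) = ½(g([x,Jy],z) − g([x,y],Jz))` has vanishing cyclic sum:
the quasi-Kähler `W₃`-condition. -/
theorem cyclicSum_F_eq_zero {L : Type*} [LieRing L] [LieAlgebra ℝ L]
    [FiniteDimensional ℝ L]
    (g : LinearMap.BilinForm ℝ L)
    (hsymm : ∀ x y : L, g x y = g y x)
    (hkill : ∀ x y z : L, g ⁅x, y⁆ z + g ⁅x, z⁆ y = 0)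
    (J : L →ₗ[ℝ] L)
    (hJ2 : ∀ x : L, J (J x) = -x)
    (hJg : ∀ x y : L, g (J x) (J y) = -g x y)
    (F : L → L → L → ℝ)
    (hF : ∀ x y z : L, F x y z = (1 / 2) * (g ⁅x, J y⁆ z - g ⁅x, y⁆ (J z))) :
    ∀ x y z : L, F x y z + F y z x + F z x y = 0 := by
  have cyc : ∀ a b c : L, g ⁅a, b⁆ c = g ⁅c, a⁆ b := by
    intro a b c
    have h := hkill a b c
    rw [← lie_skew c a, map_neg, LinearMap.neg_apply] at *
    linarith
  intro x y z
  rw [hF, hF, hF, cyc x (J y) z, cyc y (J z) x, cyc z (J x) y]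
  ring
end

section
/- Let 𝔤 be a finite-dimensional real Lie algebra, g an ad-invariant symmetric bilinear form on 𝔤, and J a linear endomorphism with J² = −id and g(Jx,Jy) = −g(x,y). Define F(x,y,z) = ½(g([x,Jy],z) − g([x,y],Jz)). Then F has the symmetries F(x,y,z) = F(x,z,y) = F(x,Jy,Jz) for all x, y, z ∈ 𝔤. -/
/-- for a finite-dimensional real Lie algebra with an ad-invariant
(Killing) symmetric bilinear form `g` and an almost complex structure `J`
(`J² = -id`) which is an anti-isometry for `g`, the tensor
`F(x,y,z) = ½(g([x,Jy],z) − g([x,y],Jz))` has the symmetries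
`F(x,y,z) = F(x,z,y) = F(x,Jy,Jz)`. -/
theorem F_symmetries {L : Type*} [LieRing L] [LieAlgebra ℝ L]
    [FiniteDimensional ℝ L]
    (g : LinearMap.BilinForm ℝ L)
    (hsymm : ∀ x y : L, g x y = g y x)
    (hkill : ∀ x y z : L, g ⁅x, y⁆ z + g ⁅x, z⁆ y = 0)
    (J : L →ₗ[ℝ] L)
    (hJ2 : ∀ x : L, J (J x) = -x)
    (hJg : ∀ x y : L, g (J x) (J y) = -g x y)
    (F : L → L → L → ℝ)
    (hF : ∀ x y z : L, F x y z = (1 / 2) * (g ⁅x, J y⁆ z - g ⁅x, y⁆ (J z))) :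
    ∀ x y z : L, F x y z = F x z y ∧ F x y z = F x (J y) (J z) := by
  intro x y z
  have h1 := hkill x (J z) y
  have h2 := hkill x z (J y)
  refine ⟨?_, ?_⟩
  · rw [hF, hF]; linarith
  · rw [hF, hF, hJ2, hJ2]
    simp only [lie_neg, map_neg, LinearMap.neg_apply]
    ring
end

section
/- For the 4n-parametric family of Lie brackets on ℝ^{4n}, the Nijenhuis tensor N(x,y) = [x,y] + J[Jx,y] + J[x,Jy] − [Jx,Jy] has, for each α (writing 1̄=4α−3, 2̄=4α−2, 3̄=4α−1, 4̄=4α), the components N(X_1̄,X_2̄) = −N(X_3̄,X_4̄) = 2(λ_4̄X_1̄ − λ_3̄X_2̄ + λ_2̄X_3̄ − λ_1̄X_4̄) and N(X_1̄,X_4̄) = −N(X_2̄,X_3̄) = 2(λ_2̄X_1̄ − λ_1̄X_2̄ − λ_4̄X_3̄ + λ_3̄X_4̄); together with the antisymmetry N(X_i,X_j) = −N(X_j,X_i), all other components N(X_i,X_j) are zero (in particular N(X_1̄,X_3̄) = N(X_2̄,X_4̄) = 0 and N(X_i,X_j) = 0 whenever X_i, X_j lie in different blocks). -/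
noncomputable section

/-- The Nijenhuis tensor `N(x,y) = [x,y] + J[Jx,y] + J[x,Jy] − [Jx,Jy]`. -/
def Nt {n : ℕ} (lam : Fin n × Fin 4 → ℝ) (x y : V n) : V n :=
  brk lam x y + Jm (brk lam (Jm x) y) + Jm (brk lam x (Jm y)) -
    brk lam (Jm x) (Jm y)

set_option maxHeartbeats 4000000

theorem Nt_antisymm {n : ℕ} (lam : Fin n × Fin 4 → ℝ) (x y : V n) :
    Nt lam x y = -Nt lam y x := by
  ext ⟨b, k⟩
  fin_cases k <;> simp [Nt, brk, Jm, sc, Fin.sum_univ_four] <;> ring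

/-- the components of the Nijenhuis tensor on the basis vectors:
`N(X_1̄,X_2̄) = −N(X_3̄,X_4̄) = 2(λ_4̄X_1̄ − λ_3̄X_2̄ + λ_2̄X_3̄ − λ_1̄X_4̄)`,
`N(X_1̄,X_4̄) = −N(X_2̄,X_3̄) = 2(λ_2̄X_1̄ − λ_1̄X_2̄ − λ_4̄X_3̄ + λ_3̄X_4̄)`;
together with the antisymmetry `N(X_i,X_j) = −N(X_j,X_i)`, all other
components vanish: `N(X_1̄,X_3̄) = N(X_2̄,X_4̄) = 0` and `N(X_i,X_j) = 0`
whenever `X_i`, `X_j` lie in different blocks. -/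
theorem Nt_components {n : ℕ} (hn : 1 ≤ n) (lam : Fin n × Fin 4 → ℝ) :
    (∀ i j : Fin n × Fin 4, Nt lam (X i) (X j) = -Nt lam (X j) (X i)) ∧
    (∀ α : Fin n,
      Nt lam (X (α, 0)) (X (α, 1)) =
        (2 : ℝ) • (lam (α, 3) • X (α, 0) - lam (α, 2) • X (α, 1) +
          lam (α, 1) • X (α, 2) - lam (α, 0) • X (α, 3)) ∧
      Nt lam (X (α, 2)) (X (α, 3)) =
        -((2 : ℝ) • (lam (α, 3) • X (α, 0) - lam (α, 2) • X (α, 1) +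
          lam (α, 1) • X (α, 2) - lam (α, 0) • X (α, 3))) ∧
      Nt lam (X (α, 0)) (X (α, 3)) =
        (2 : ℝ) • (lam (α, 1) • X (α, 0) - lam (α, 0) • X (α, 1) -
          lam (α, 3) • X (α, 2) + lam (α, 2) • X (α, 3)) ∧
      Nt lam (X (α, 1)) (X (α, 2)) =
        -((2 : ℝ) • (lam (α, 1) • X (α, 0) - lam (α, 0) • X (α, 1) -
          lam (α, 3) • X (α, 2) + lam (α, 2) • X (α, 3))) ∧
      Nt lam (X (α, 0)) (X (α, 2)) = 0 ∧
      Nt lam (X (α, 1)) (X (α, 3)) = 0) ∧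
    (∀ i j : Fin n × Fin 4, i.1 ≠ j.1 → Nt lam (X i) (X j) = 0) := by
  refine ⟨fun i j => ?_, fun α => ⟨?_, ?_, ?_, ?_, ?_, ?_⟩, fun i j hij => ?_⟩
  · exact Nt_antisymm lam (X i) (X j)
  iterate 6
    · ext ⟨b, k⟩
      by_cases hb : b = α
      · subst hb
        fin_cases k <;>
          simp [Nt, brk, Jm, sc, X, Fin.sum_univ_four] <;> ring
      · fin_cases k <;>
          simp [Nt, brk, Jm, sc, X, Fin.sum_univ_four, hb]
  · obtain ⟨a, r⟩ := i
    obtain ⟨c, s⟩ := j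
    ext ⟨b, k⟩
    simp only [ne_eq] at hij
    by_cases hb : b = a
    · subst hb
      fin_cases k <;>
        simp [Nt, brk, Jm, sc, X, Fin.sum_univ_four, hij]
    · fin_cases k <;>
        simp [Nt, brk, Jm, sc, X, Fin.sum_univ_four, hb]
end
end

section
/- For the 4n-parametric family of Lie brackets on ℝ^{4n}, the square norm of the Nijenhuis tensor N, defined by ‖N‖² = Σ_{i,j=1}^{4n} ε_i ε_j g(N(X_i,X_j), N(X_i,X_j)) where ε_i = g(X_i,X_i), equals ‖N‖² = −32 Σ_{α=1}^{n} (λ_{4α−3}² + λ_{4α−2}² − λ_{4α−1}² − λ_{4α}²). -/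
noncomputable section

/-- Block model of the bracket. -/
def bb (l x y : Fin 4 → ℝ) : Fin 4 → ℝ := fun t =>
  ∑ r : Fin 4, ∑ s : Fin 4, x r * y s * sc l r s t

/-- Block model of `J`. -/
def jb (x : Fin 4 → ℝ) : Fin 4 → ℝ := ![-x 2, -x 3, x 0, x 1]

/-- Block model of the Nijenhuis tensor. -/
def nb (l x y : Fin 4 → ℝ) : Fin 4 → ℝ :=
  fun t => bb l x y t + jb (bb l (jb x) y) t + jb (bb l x (jb y)) t - bb l (jb x) (jb y) t

/-- Block basis vector. -/
def eb (r : Fin 4) : Fin 4 → ℝ := fun t => if t = r then 1 else 0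

lemma Nt_block {n : ℕ} (lam : Fin n × Fin 4 → ℝ) (x y : V n) (α : Fin n) (t : Fin 4) :
    Nt lam x y (α, t) =
      nb (fun t => lam (α, t)) (fun t => x (α, t)) (fun t => y (α, t)) t := rfl

lemma jb_zero : jb 0 = 0 := by
  ext t; fin_cases t <;> simp [jb]

lemma bb_zero_left (l y : Fin 4 → ℝ) : bb l 0 y = 0 := by
  ext t; simp [bb]

lemma bb_zero_right (l y : Fin 4 → ℝ) : bb l y 0 = 0 := by
  ext t; simp [bb]

lemma X_block {n : ℕ} (β α : Fin n) (r : Fin 4) :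
    (fun t => (X (β, r) : V n) (α, t)) = if α = β then eb r else 0 := by
  ext t
  by_cases h : α = β <;> simp [X, eb, h]

lemma Nt_X {n : ℕ} (lam : Fin n × Fin 4 → ℝ) (α β γ : Fin n) (r s t : Fin 4) :
    Nt lam (X (β, r)) (X (γ, s)) (α, t) =
      if α = β then (if α = γ then nb (fun t => lam (α, t)) (eb r) (eb s) t else 0) else 0 := by
  rw [Nt_block, X_block, X_block]
  split_ifs <;> simp [nb, jb_zero, bb_zero_left, bb_zero_right]

lemma block_sum (l : Fin 4 → ℝ) :
    ∑ r : Fin 4, ∑ s : Fin 4, ∑ t : Fin 4,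
      sgn r * sgn s * (sgn t * nb l (eb r) (eb s) t * nb l (eb r) (eb s) t) =
      -32 * (l 0 ^ 2 + l 1 ^ 2 - l 2 ^ 2 - l 3 ^ 2) := by
  simp [Fin.sum_univ_four, nb, bb, jb, eb, sc, sgn]
  ring

/-- the square norm of the Nijenhuis tensor,
`‖N‖² = Σ_{i,j} ε_i ε_j g(N(X_i,X_j), N(X_i,X_j))` with `ε_i = g(X_i,X_i)`,
equals `−32 Σ_α (λ_{4α−3}² + λ_{4α−2}² − λ_{4α−1}² − λ_{4α}²)`. -/
theorem normSq_Nijenhuis {n : ℕ} (hn : 1 ≤ n) (lam : Fin n × Fin 4 → ℝ) :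
    ∑ i : Fin n × Fin 4, ∑ j : Fin n × Fin 4,
        sgn i.2 * sgn j.2 * gf (Nt lam (X i) (X j)) (Nt lam (X i) (X j)) =
      -32 * ∑ α : Fin n,
        (lam (α, 0) ^ 2 + lam (α, 1) ^ 2 - lam (α, 2) ^ 2 - lam (α, 3) ^ 2) := by
  have key : ∀ (β γ : Fin n) (r s : Fin 4),
      sgn r * sgn s * gf (Nt lam (X (β, r)) (X (γ, s))) (Nt lam (X (β, r)) (X (γ, s))) =
      if β = γ then ∑ t : Fin 4, sgn r * sgn s * (sgn t *
        nb (fun t => lam (β, t)) (eb r) (eb s) t * nb (fun t => lam (β, t)) (eb r) (eb s) t)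
      else 0 := by
    intro β γ r s
    unfold gf
    rw [Fintype.sum_prod_type, Finset.sum_eq_single β]
    · by_cases h : β = γ
      · simp [Nt_X, h, Finset.mul_sum]
      · simp [Nt_X, h]
    · intro α _ h
      simp [Nt_X, h]
    · simp
  rw [Fintype.sum_prod_type, Finset.mul_sum]
  refine Finset.sum_congr rfl fun β _ => ?_
  rw [← block_sum (fun t => lam (β, t))]
  refine Finset.sum_congr rfl fun r _ => ?_
  rw [Fintype.sum_prod_type, Finset.sum_eq_single β]
  · simp [key]
  · intro γ _ h
    simp [key, h.symm]
  · simp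
end
end

section
/- For the 4n-parametric family of Lie brackets on ℝ^{4n}, the square norm of ∇J, defined by ‖∇J‖² = Σ_{i,k,p=1}^{4n} ε_i ε_k ε_p F(X_i,X_k,X_p)² where F(x,y,z) = ½(g([x,Jy],z) − g([x,y],Jz)) and ε_i = g(X_i,X_i), equals ‖∇J‖² = 4 Σ_{α=1}^{n} (λ_{4α−3}² + λ_{4α−2}² − λ_{4α−1}² − λ_{4α}²). -/
noncomputable section

/-- The tensor `F(x,y,z) = ½(g([x,Jy],z) − g([x,y],Jz))`, which equals
`g((∇_x J)y, z)` for the Levi-Civita connection of the left-invariant Killing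
metric `g`. -/
def Ff {n : ℕ} (lam : Fin n × Fin 4 → ℝ) (x y z : V n) : ℝ :=
  (1 / 2) * (gf (brk lam x (Jm y)) z - gf (brk lam x y) (Jm z))

def jp : Fin 4 → Fin 4 := ![2, 3, 0, 1]

def js : Fin 4 → ℝ := ![1, 1, -1, -1]

lemma Jm_X {n : ℕ} (a : Fin n) (s : Fin 4) (p : Fin n × Fin 4) :
    Jm (X (a, s)) p = js s * X (a, jp s) p := by
  obtain ⟨b, t⟩ := p
  by_cases h : b = a <;> fin_cases s <;> fin_cases t <;> simp [Jm, X, js, jp, h]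

lemma gf_X {n : ℕ} (x : V n) (p : Fin n × Fin 4) : gf x (X p) = sgn p.2 * x p := by
  simp [gf, X]

lemma gf_JX {n : ℕ} (x : V n) (c : Fin n) (t : Fin 4) :
    gf x (Jm (X (c, t))) = js t * sgn (jp t) * x (c, jp t) := by
  have h := gf_X x (c, jp t)
  have : gf x (Jm (X (c, t))) = js t * gf x (X (c, jp t)) := by
    simp only [gf, Jm_X, Finset.mul_sum]
    exact Finset.sum_congr rfl fun _ _ => by ring
  rw [this, h]; ring

lemma brk_X {n : ℕ} (lam : Fin n × Fin 4 → ℝ) (a : Fin n) (r : Fin 4) (y : V n)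
    (c : Fin n) (t : Fin 4) : brk lam (X (a, r)) y (c, t) =
      if c = a then ∑ s, y (a, s) * sc (fun u => lam (a, u)) r s t else 0 := by
  by_cases h : c = a
  · subst h
    simp only [brk, X, Prod.mk.injEq, true_and, if_true]
    rw [Finset.sum_eq_single r]
    · simp
    · intro b _ hb; simp [hb]
    · simp
  · simp [brk, X, h]

def G (l : Fin 4 → ℝ) (r s t : Fin 4) : ℝ :=
  (1 / 2) * (sgn t * (js s * sc l r (jp s) t) - js t * sgn (jp t) * sc l r s (jp t))

lemma sum_X {n : ℕ} (a b : Fin n) (s : Fin 4) (f : Fin 4 → ℝ) :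
    ∑ u, X (b, s) (a, u) * f u = if b = a then f s else 0 := by
  by_cases h : b = a
  · simp [X, h]
  · have h2 : ¬ a = b := fun e => h e.symm
    simp [X, h, h2]

lemma Ff_X {n : ℕ} (lam : Fin n × Fin 4 → ℝ) (a b c : Fin n) (r s t : Fin 4) :
    Ff lam (X (a, r)) (X (b, s)) (X (c, t)) =
      if b = a then if c = a then G (fun u => lam (a, u)) r s t else 0 else 0 := by
  simp only [Ff, gf_X, gf_JX, brk_X, Jm_X, mul_assoc, ← Finset.mul_sum, sum_X, G]
  split_ifs <;> simp

lemma G_sum (l : Fin 4 → ℝ) :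
    ∑ r, ∑ s, ∑ t, sgn r * sgn s * sgn t * G l r s t ^ 2 =
      4 * (l 0 ^ 2 + l 1 ^ 2 - l 2 ^ 2 - l 3 ^ 2) := by
  simp [Fin.sum_univ_four, G, sgn, js, jp, sc]
  ring

/-- the square norm of `∇J`,
`‖∇J‖² = Σ_{i,k,p} ε_i ε_k ε_p F(X_i,X_k,X_p)²` with `ε_i = g(X_i,X_i)`,
equals `4 Σ_α (λ_{4α−3}² + λ_{4α−2}² − λ_{4α−1}² − λ_{4α}²)`. -/
theorem normSq_nablaJ {n : ℕ} (hn : 1 ≤ n) (lam : Fin n × Fin 4 → ℝ) :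
    ∑ i : Fin n × Fin 4, ∑ k : Fin n × Fin 4, ∑ p : Fin n × Fin 4,
        sgn i.2 * sgn k.2 * sgn p.2 * Ff lam (X i) (X k) (X p) ^ 2 =
      4 * ∑ α : Fin n,
        (lam (α, 0) ^ 2 + lam (α, 1) ^ 2 - lam (α, 2) ^ 2 - lam (α, 3) ^ 2) := by
  simp only [Fintype.sum_prod_type, Ff_X]
  rw [Finset.mul_sum]
  refine Finset.sum_congr rfl fun a _ => ?_
  rw [← G_sum (fun u => lam (a, u))]
  refine Finset.sum_congr rfl fun r _ => ?_
  rw [Finset.sum_eq_single a]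
  · refine Finset.sum_congr rfl fun s _ => ?_
    rw [Finset.sum_eq_single a]
    · simp
    · intro c _ hc; simp [hc]
    · simp
  · intro b _ hb; simp [hb]
  · simp
end
end

section
/- For the 4n-parametric family of Lie brackets on ℝ^{4n}, the sectional curvatures k(x,y) = R(x,y,y,x)/(g(x,x)g(y,y) − g(x,y)²) of the basic 2-planes are, for each α (writing 1̄=4α−3, 2̄=4α−2, 3̄=4α−1, 4̄=4α): k(X_1̄,X_3̄) = −¼(λ_2̄²−λ_4̄²), k(X_2̄,X_4̄) = −¼(λ_1̄²−λ_3̄²), k(X_1̄,X_2̄) = −¼(λ_1̄²+λ_2̄²), k(X_1̄,X_4̄) = −¼(λ_1̄²−λ_4̄²), k(X_2̄,X_3̄) = −¼(λ_2̄²−λ_3̄²), k(X_3̄,X_4̄) = ¼(λ_3̄²+λ_4̄²). -/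
noncomputable section

/-- The curvature tensor `R(x,y,z,u) = −¼ g([x,y],[z,u])`. -/
def Rc {n : ℕ} (lam : Fin n × Fin 4 → ℝ) (x y z u : V n) : ℝ :=
  -(1 / 4) * gf (brk lam x y) (brk lam z u)

/-- The sectional curvature `k(x,y) = R(x,y,y,x)/(g(x,x)g(y,y) − g(x,y)²)` of
the 2-plane spanned by `x` and `y`. -/
def sect {n : ℕ} (lam : Fin n × Fin 4 → ℝ) (x y : V n) : ℝ :=
  Rc lam x y y x / (gf x x * gf y y - gf x y ^ 2)

theorem aux_gf {n : ℕ} (α : Fin n) (r s : Fin 4) :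
    gf (X (α, r)) (X (α, s)) = if r = s then sgn r else 0 := by
  unfold gf X
  rw [Finset.sum_eq_single (α, r)]
  · simp
  · intro b _ hb
    simp [hb]
  · simp

theorem aux_brk {n : ℕ} (lam : Fin n × Fin 4 → ℝ) (α : Fin n) (r s : Fin 4)
    (p : Fin n × Fin 4) : brk lam (X (α, r)) (X (α, s)) p =
      if p.1 = α then sc (fun t => lam (α, t)) r s p.2 else 0 := by
  unfold brk X
  obtain ⟨b, q⟩ := p
  by_cases h : b = α
  · subst h
    simp
  · simp [h]

theorem aux_gf_brk {n : ℕ} (lam : Fin n × Fin 4 → ℝ) (α : Fin n) (r s : Fin 4) :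
    gf (brk lam (X (α, r)) (X (α, s))) (brk lam (X (α, s)) (X (α, r))) =
      ∑ q : Fin 4, sgn q * sc (fun t => lam (α, t)) r s q *
        sc (fun t => lam (α, t)) s r q := by
  unfold gf
  simp only [aux_brk]
  rw [Fintype.sum_prod_type, Finset.sum_eq_single α]
  · simp
  · intro b _ hb
    simp [hb]
  · simp

/-- the sectional curvatures of the basic 2-planes. -/
theorem sectional_curvatures {n : ℕ} (hn : 1 ≤ n) (lam : Fin n × Fin 4 → ℝ) :
    ∀ α : Fin n,
      sect lam (X (α, 0)) (X (α, 2)) = -(1 / 4) * (lam (α, 1) ^ 2 - lam (α, 3) ^ 2) ∧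
      sect lam (X (α, 1)) (X (α, 3)) = -(1 / 4) * (lam (α, 0) ^ 2 - lam (α, 2) ^ 2) ∧
      sect lam (X (α, 0)) (X (α, 1)) = -(1 / 4) * (lam (α, 0) ^ 2 + lam (α, 1) ^ 2) ∧
      sect lam (X (α, 0)) (X (α, 3)) = -(1 / 4) * (lam (α, 0) ^ 2 - lam (α, 3) ^ 2) ∧
      sect lam (X (α, 1)) (X (α, 2)) = -(1 / 4) * (lam (α, 1) ^ 2 - lam (α, 2) ^ 2) ∧
      sect lam (X (α, 2)) (X (α, 3)) = (1 / 4) * (lam (α, 2) ^ 2 + lam (α, 3) ^ 2) := by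
  intro α
  refine ⟨?_, ?_, ?_, ?_, ?_, ?_⟩ <;>
    simp only [sect, Rc, aux_gf, aux_gf_brk, Fin.sum_univ_four] <;>
    simp [sgn, sc] <;> ring
end
end
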